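/- For any partition λ and any n ≥ 1, the total degree in the x-variables of the hybrid Grothendieck polynomial G_λ(x_1,...,x_n; 1; 1) (all t_i = w_i = 1) is equal to the size |λ̄^{(n)}| = Σ_i λ̄^{(n)}_i. -/

import Mathlib

open scoped Classical

/-- A partition, given as its weakly decreasing sequence of parts (0-indexed),
with finitely many nonzero parts. -/
def IsPartitionFun (f : ℕ → ℕ) : Prop :=
  (∀ i, f (i + 1) ≤ f i) ∧ ∃ N, ∀ i, N ≤ i → f i = 0

/-- Box `(i, j)` (row `i`, column `j`, both 0-indexed) lies in the skew shape `lam/mu`. -/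
def InShape (lam mu : ℕ → ℕ) (i j : ℕ) : Prop :=
  mu i ≤ j ∧ j < lam i

/-- `A ≤ B` for finite sets of naturals: every element of `A` is at most every
element of `B` (for nonempty sets this says `max A ≤ min B`). -/
def FinsetLE (A B : Finset ℕ) : Prop :=
  ∀ a ∈ A, ∀ b ∈ B, a ≤ b

/-- A set-valued reverse plane partition of skew shape `lam/mu`: every box of the
shape is filled with a nonempty finite set of positive integers, the sets weakly
increase along rows and down columns, and boxes outside the shape are empty. -/
def IsSVRPP (lam mu : ℕ → ℕ) (T : ℕ → ℕ → Finset ℕ) : Prop :=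
  (∀ i j, ¬ InShape lam mu i j → T i j = ∅) ∧
  (∀ i j, InShape lam mu i j → (T i j).Nonempty) ∧
  (∀ i j x, x ∈ T i j → 1 ≤ x) ∧
  (∀ i j, InShape lam mu i j → InShape lam mu i (j + 1) → FinsetLE (T i j) (T i (j + 1))) ∧
  (∀ i j, InShape lam mu i j → InShape lam mu (i + 1) j → FinsetLE (T i j) (T (i + 1) j))

/-- An SVRPP all of whose entries are subsets of `{1, …, n}`. -/
def IsSVRPPn (lam mu : ℕ → ℕ) (n : ℕ) (T : ℕ → ℕ → Finset ℕ) : Prop :=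
  IsSVRPP lam mu T ∧ ∀ i j, T i j ⊆ Finset.Icc 1 n

/-- `ircont T v` = number of columns of `T` containing a set that contains `v`. -/
noncomputable def ircont (T : ℕ → ℕ → Finset ℕ) (v : ℕ) : ℕ :=
  Set.ncard {j : ℕ | ∃ i, v ∈ T i j}

/-- `ceq lam mu T i` = number of boxes `(i,j)` of the shape with `(i+1,j)` also in the
shape and `max T(i,j) = min T(i+1,j)`. -/
noncomputable def ceq (lam mu : ℕ → ℕ) (T : ℕ → ℕ → Finset ℕ) (i : ℕ) : ℕ :=
  Set.ncard {j : ℕ | InShape lam mu i j ∧ InShape lam mu (i + 1) j ∧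
    ∃ m, m ∈ T i j ∧ (∀ x ∈ T i j, x ≤ m) ∧ m ∈ T (i + 1) j ∧ ∀ x ∈ T (i + 1) j, m ≤ x}

/-- `exv lam mu T i` = excess of row `i`: the sum over the boxes of row `i` of
(cardinality of the filling minus one). -/
def exv (lam mu : ℕ → ℕ) (T : ℕ → ℕ → Finset ℕ) (i : ℕ) : ℕ :=
  ∑ j ∈ Finset.Ico (mu i) (lam i), ((T i j).card - 1)

/-- The hybrid Grothendieck polynomial of straight shape `lam` with all `t_i = w_i = 1`:
`G_lam(x_1,…,x_n; 1; 1) = Σ_{T ∈ SVRPP^n(lam)} x^{ircont(T)}`, where `x_{v+1} = X v`. -/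
noncomputable def hybridG11 (lam : ℕ → ℕ) (n : ℕ) : MvPolynomial (Fin n) ℤ :=
  ∑ᶠ T ∈ {T : ℕ → ℕ → Finset ℕ | IsSVRPPn lam (fun _ => 0) n T},
    ∏ v : Fin n, MvPolynomial.X v ^ ircont T ((v : ℕ) + 1)

/-! ### The partitions `λ^♭` and `λ̄^{(n)}` and the tableau `T_max` -/

/-- The strict partition `λ^♭` (1-indexed part `v` is `flatPart lam (v-1)`):
`λ^♭_1 = λ_1` and `λ^♭_i = max{0, min{λ^♭_{i−1} − 1, λ_i}}` for `i ≥ 2` (truncated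
subtraction realizes the `max{0, ·}`). -/
def flatPart (lam : ℕ → ℕ) : ℕ → ℕ
  | 0 => lam 0
  | i + 1 => min (flatPart lam i - 1) (lam (i + 1))

/-- `k` = number of positive parts of `λ^♭`. -/
noncomputable def kFlat (lam : ℕ → ℕ) : ℕ :=
  Set.ncard {i : ℕ | 0 < flatPart lam i}

/-- The partition `λ̄^{(n)}`, as a function of the 1-indexed part `v`:
`λ̄^{(n)}_v = λ^♭_v + v − 1` for `1 ≤ v ≤ min(n, k)`, `λ̄^{(n)}_v = k` for `k < v ≤ n`,
and `0` for `v > n`. -/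
noncomputable def barLam (lam : ℕ → ℕ) (n : ℕ) (v : ℕ) : ℕ :=
  if 1 ≤ v ∧ v ≤ n then
    (if v ≤ kFlat lam then flatPart lam (v - 1) + (v - 1) else kFlat lam)
  else 0

/-- The tableau `T_max ∈ SVRPP^n(lam)`: in 1-indexed coordinates `(i, j)`,
`T_max(i,j) = {i}` if `i ≤ n` and `j < λ^♭_i`; `T_max(i,j) = {i, …, n}` if `i ≤ n` and
`j = λ^♭_i`; and `T_max(i,j) = {n}` otherwise (internally rows `r` and columns `j` are
0-indexed, so `(i, j) = (r + 1, j + 1)`). -/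
noncomputable def Tmax (lam : ℕ → ℕ) (n : ℕ) : ℕ → ℕ → Finset ℕ :=
  fun r j =>
    if j < lam r then
      (if r + 1 ≤ n ∧ j + 1 < flatPart lam r then {r + 1}
       else if r + 1 ≤ n ∧ j + 1 = flatPart lam r then Finset.Icc (r + 1) n
       else {n})
    else ∅

/-!
Record every occurrence of an entry `v` in a column `j` (counted from `0`) as the lattice point
`(j, v)`. The exponents of the monomial of a tableau add up to the number of its points, and all
monomials have coefficient `1`, so the total degree is the largest number of points of a tableau.

Along an antidiagonal `j + v = c`, entries strictly decrease as columns increase, so the rows that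
contain them strictly decrease too. If `r` points lie to the right of `(j, v)` on its antidiagonal,
this forces `r < v` and `j < λ^♭_{r+1}`, by comparing with the next point on the antidiagonal.
Points of a given rank `r` lie on different antidiagonals, and only `λ^♭_{r+1} + n - (r + 1)` of
them satisfy these bounds. Summing over `r < min n k` gives `|λ̄^{(n)}|`, which `T_max` attains.
-/

/-! ### Total degree of a sum of monic monomials -/

theorem totalDegree_sum_monomial_one {ι σ R : Type*} [CommSemiring R] [CharZero R] (s : Finset ι)
    (e : ι → σ →₀ ℕ) :
    (∑ t ∈ s, MvPolynomial.monomial (e t) (1 : R)).totalDegree = s.sup fun t => (e t).degree := by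
  have hsupp : (∑ t ∈ s, MvPolynomial.monomial (e t) (1 : R)).support = s.image e := by
    ext d
    simp [MvPolynomial.coeff_sum, MvPolynomial.coeff_monomial, Finset.filter_eq_empty_iff]
  rw [MvPolynomial.totalDegree, hsupp, Finset.sup_image]
  rfl

theorem totalDegree_sum_prod_X_pow {ι σ R : Type*} [Fintype σ] [CommSemiring R] [CharZero R]
    (s : Finset ι) (e : ι → σ → ℕ) :
    (∑ t ∈ s, ∏ i, (MvPolynomial.X i : MvPolynomial σ R) ^ e t i).totalDegree =
      s.sup fun t => ∑ i, e t i := by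
  have hmon (t : ι) : ∏ i, (MvPolynomial.X i : MvPolynomial σ R) ^ e t i =
      MvPolynomial.monomial (Finsupp.equivFunOnFinite.symm (e t)) 1 := by
    simp [MvPolynomial.monomial_eq, Finsupp.prod_fintype]
  simp only [hmon, totalDegree_sum_monomial_one, Finsupp.degree_eq_sum,
    Finsupp.coe_equivFunOnFinite_symm]

/-! ### Monotonicity of tableaux -/

theorem FinsetLE.trans {A B C : Finset ℕ} (hAB : FinsetLE A B) (hBC : FinsetLE B C)
    (hB : B.Nonempty) : FinsetLE A C := fun a ha c hc =>
  let ⟨b, hb⟩ := hB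
  (hAB a ha b hb).trans (hBC b hb c hc)

theorem finsetLE_of_lt_of_forall_succ {F : ℕ → Finset ℕ} {a b : ℕ} (hab : a < b)
    (hne : ∀ c ∈ Set.Ioo a b, (F c).Nonempty)
    (hF : ∀ c ∈ Set.Ico a b, FinsetLE (F c) (F (c + 1))) : FinsetLE (F a) (F b) := by
  induction b, hab using Nat.le_induction with
  | base => exact hF a (by simp)
  | succ b hab ih =>
    have ih' := ih (fun c hc => hne c ⟨hc.1, hc.2.trans b.lt_succ_self⟩)
      (fun c hc => hF c ⟨hc.1, hc.2.trans b.lt_succ_self⟩)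
    exact ih'.trans (hF b ⟨by omega, b.lt_succ_self⟩) (hne b ⟨hab, b.lt_succ_self⟩)

theorem IsPartitionFun.antitone {f : ℕ → ℕ} (hf : IsPartitionFun f) : Antitone f :=
  antitone_nat_of_succ_le hf.1

section SVRPP

variable {lam mu : ℕ → ℕ} {T : ℕ → ℕ → Finset ℕ} {i i' j j' x y n : ℕ}

theorem IsSVRPP.inShape_of_mem (hT : IsSVRPP lam mu T) (hx : x ∈ T i j) : InShape lam mu i j := by
  by_contra h
  simp [hT.1 i j h] at hx

theorem IsSVRPP.finsetLE_of_row (hT : IsSVRPP lam mu T) (h : InShape lam mu i j)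
    (h' : InShape lam mu i j') (hj : j < j') : FinsetLE (T i j) (T i j') := by
  have hshape (c : ℕ) (hjc : j ≤ c) (hcj : c ≤ j') : InShape lam mu i c :=
    ⟨h.1.trans hjc, hcj.trans_lt h'.2⟩
  exact finsetLE_of_lt_of_forall_succ hj (fun c hc => hT.2.1 i c (hshape c hc.1.le hc.2.le))
    fun c hc => hT.2.2.2.1 i c (hshape c hc.1 hc.2.le)
      (hshape (c + 1) (hc.1.trans c.le_succ) hc.2)

theorem IsSVRPP.finsetLE_of_col (hlam : Antitone lam) (hmu : Antitone mu) (hT : IsSVRPP lam mu T)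
    (h : InShape lam mu i j) (h' : InShape lam mu i' j) (hi : i < i') :
    FinsetLE (T i j) (T i' j) := by
  have hshape (c : ℕ) (hic : i ≤ c) (hci : c ≤ i') : InShape lam mu c j :=
    ⟨(hmu hic).trans h.1, h'.2.trans_le (hlam hci)⟩
  exact finsetLE_of_lt_of_forall_succ (F := (T · j)) hi
    (fun c hc => hT.2.1 c j (hshape c hc.1.le hc.2.le))
    fun c hc => hT.2.2.2.2 c j (hshape c hc.1 hc.2.le)
      (hshape (c + 1) (hc.1.trans c.le_succ) hc.2)

theorem IsSVRPP.le_of_le_of_lt (hlam : Antitone lam) (hmu : Antitone mu) (hT : IsSVRPP lam mu T)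
    (hi : i ≤ i') (hj : j < j') (hx : x ∈ T i j) (hy : y ∈ T i' j') : x ≤ y := by
  have h := hT.inShape_of_mem hx
  have h' := hT.inShape_of_mem hy
  have hcorner : InShape lam mu i j' := ⟨h.1.trans hj.le, h'.2.trans_le (hlam hi)⟩
  have hrow := hT.finsetLE_of_row h hcorner hj
  rcases hi.eq_or_lt with rfl | hi
  · exact hrow x hx y hy
  · exact hrow.trans (hT.finsetLE_of_col hlam hmu hcorner h' hi) (hT.2.1 i j' hcorner) x hx y hy

theorem finite_setOf_isSVRPPn (hlam : IsPartitionFun lam) (mu : ℕ → ℕ) (n : ℕ) :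
    {T | IsSVRPPn lam mu n T}.Finite := by
  obtain ⟨N, hN⟩ := hlam.2
  let graph (T : ℕ → ℕ → Finset ℕ) : Set (ℕ × ℕ × ℕ) := {p | p.2.2 ∈ T p.1 p.2.1}
  have hinj : Function.Injective graph := fun T T' h => by
    funext i j
    ext x
    exact Set.ext_iff.mp h (i, j, x)
  have hbox : (Set.Iio N ×ˢ Set.Iio (lam 0) ×ˢ Set.Iic n).Finite :=
    (Set.finite_Iio N).prod ((Set.finite_Iio _).prod (Set.finite_Iic n))
  refine (hbox.finite_subsets.preimage hinj.injOn).subset fun T hT => ?_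
  rintro ⟨i, j, x⟩ hx
  have hj : j < lam i := (hT.1.inShape_of_mem hx).2
  have hi : i < N := not_le.mp fun h => by simp [hN i h] at hj
  exact ⟨hi, hj.trans_le (hlam.antitone i.zero_le), (Finset.mem_Icc.mp (hT.2 i j hx)).2⟩

/-! ### Occurrences of entries in columns -/

/-- The points `(j, v)` such that the entry `v` occurs in column `j` of `T`. As `ircont` ignores
repetitions within a column, it counts the points of a given height. -/
def columnContent (T : ℕ → ℕ → Finset ℕ) : Set (ℕ × ℕ) :=
  {p | ∃ i, p.2 ∈ T i p.1}

theorem IsSVRPP.lt_of_mem_columnContent (hlam : Antitone lam) (hT : IsSVRPP lam mu T)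
    {p : ℕ × ℕ} (hp : p ∈ columnContent T) : p.1 < lam 0 :=
  let ⟨i, hi⟩ := hp
  (hT.inShape_of_mem hi).2.trans_le (hlam i.zero_le)

theorem IsSVRPPn.mem_Icc_of_mem_columnContent (hT : IsSVRPPn lam mu n T) {p : ℕ × ℕ}
    (hp : p ∈ columnContent T) : p.2 ∈ Finset.Icc 1 n :=
  let ⟨i, hi⟩ := hp
  hT.2 i p.1 hi

theorem IsSVRPPn.finite_columnContent (hlam : Antitone lam) (hT : IsSVRPPn lam mu n T) :
    (columnContent T).Finite :=
  ((Set.finite_Iio (lam 0)).prod (Finset.finite_toSet (Finset.Icc 1 n))).subset fun _ hp =>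
    ⟨hT.1.lt_of_mem_columnContent hlam hp, hT.mem_Icc_of_mem_columnContent hp⟩

theorem IsSVRPPn.sum_ircont (hlam : Antitone lam) (hT : IsSVRPPn lam mu n T) :
    ∑ v ∈ Finset.Icc 1 n, ircont T v = (columnContent T).ncard := by
  have hfin := hT.finite_columnContent hlam
  rw [Set.ncard_eq_toFinset_card _ hfin, Finset.card_eq_sum_card_fiberwise (f := Prod.snd)
    fun p hp => hT.mem_Icc_of_mem_columnContent (hfin.mem_toFinset.mp hp)]
  refine Finset.sum_congr rfl fun v _ => ?_
  rw [ircont, ← Set.ncard_image_of_injective _ (Prod.mk_left_injective v),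
    ← Set.ncard_coe_finset]
  congr 1
  ext ⟨j, w⟩
  simp only [Set.mem_image, Set.mem_ofPred_eq, Prod.mk.injEq, Finset.coe_filter,
    Set.Finite.mem_toFinset, columnContent]
  grind

end SVRPP

/-! ### Ranks along antidiagonals -/

/-- The points of `S` strictly to the right of `p` on the antidiagonal through `p`. -/
noncomputable def antidiagonalRight (S : Set (ℕ × ℕ)) (p : ℕ × ℕ) : Finset (ℕ × ℕ) :=
  {q ∈ Finset.HasAntidiagonal.antidiagonal (p.1 + p.2) | p.1 < q.1 ∧ q ∈ S}

/-- The rank of a point `p` on its antidiagonal: how many points of `S` follow it to the right. -/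
noncomputable def antidiagonalRank (S : Set (ℕ × ℕ)) (p : ℕ × ℕ) : ℕ :=
  (antidiagonalRight S p).card

section Antidiagonal

variable {S : Set (ℕ × ℕ)} {p q : ℕ × ℕ}

theorem mem_antidiagonalRight :
    q ∈ antidiagonalRight S p ↔ q.1 + q.2 = p.1 + p.2 ∧ p.1 < q.1 ∧ q ∈ S := by
  rw [antidiagonalRight, Finset.mem_filter, Finset.HasAntidiagonal.mem_antidiagonal]

theorem antidiagonalRank_lt_of_mem (hq : q ∈ antidiagonalRight S p) :
    antidiagonalRank S q < antidiagonalRank S p := by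
  obtain ⟨hsum, hlt, -⟩ := mem_antidiagonalRight.mp hq
  have hsub : antidiagonalRight S q ⊆ antidiagonalRight S p := fun x hx => by
    obtain ⟨hxsum, hxlt, hxS⟩ := mem_antidiagonalRight.mp hx
    exact mem_antidiagonalRight.mpr ⟨hxsum.trans hsum, hlt.trans hxlt, hxS⟩
  have hq' : q ∉ antidiagonalRight S q := fun h => (mem_antidiagonalRight.mp h).2.1.false
  exact Finset.card_lt_card ((Finset.ssubset_iff_of_subset hsub).mpr ⟨q, hq, hq'⟩)

theorem eq_of_antidiagonalRank_eq (hp : p ∈ S) (hq : q ∈ S)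
    (hrank : antidiagonalRank S p = antidiagonalRank S q) (hsum : p.1 + p.2 = q.1 + q.2) :
    p = q := by
  rcases lt_trichotomy p.1 q.1 with h | h | h
  · have := antidiagonalRank_lt_of_mem (mem_antidiagonalRight.mpr ⟨hsum.symm, h, hq⟩)
    omega
  · exact Prod.ext h (by omega)
  · have := antidiagonalRank_lt_of_mem (mem_antidiagonalRight.mpr ⟨hsum, h, hp⟩)
    omega

theorem exists_mem_antidiagonalRight_of_antidiagonalRank_eq_succ {r : ℕ}
    (hr : antidiagonalRank S p = r + 1) :
    ∃ q ∈ antidiagonalRight S p, antidiagonalRank S q = r := by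
  have hne : (antidiagonalRight S p).Nonempty :=
    Finset.card_pos.mp (r.succ_pos.trans_eq hr.symm)
  obtain ⟨q, hq, hmin⟩ := (antidiagonalRight S p).exists_min_image Prod.fst hne
  have hright : antidiagonalRight S q = (antidiagonalRight S p).erase q := by
    ext x
    have hx := hmin x
    simp only [mem_antidiagonalRight, Finset.mem_erase, ne_eq, Prod.ext_iff] at hq hx ⊢
    grind
  refine ⟨q, hq, ?_⟩
  rw [antidiagonalRank, hright, Finset.card_erase_of_mem hq]
  exact Nat.sub_eq_of_eq_add hr

end Antidiagonal

/-! ### The partitions `λ^♭` and `λ̄^{(n)}` -/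

section flatPart

variable (lam : ℕ → ℕ)

theorem flatPart_le (i : ℕ) : flatPart lam i ≤ lam i := by
  cases i <;> simp [flatPart]

theorem flatPart_succ_le (i : ℕ) : flatPart lam (i + 1) ≤ flatPart lam i - 1 :=
  min_le_left _ _

theorem flatPart_antitone : Antitone (flatPart lam) :=
  antitone_nat_of_succ_le fun i => (flatPart_succ_le lam i).trans (Nat.sub_le _ _)

theorem flatPart_le_sub_one_of_lt {i j : ℕ} (h : i < j) : flatPart lam j ≤ flatPart lam i - 1 :=
  (flatPart_antitone lam h).trans (flatPart_succ_le lam i)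

theorem flatPart_le_sub (i : ℕ) : flatPart lam i ≤ lam 0 - i := by
  induction i with
  | zero => exact flatPart_le lam 0
  | succ i ih =>
    have := flatPart_succ_le lam i
    omega

theorem strictAntiOn_flatPart_sub_one :
    StrictAntiOn (fun i => flatPart lam i - 1) {i | 0 < flatPart lam i} := by
  intro i _ j hj hij
  have := flatPart_le_sub_one_of_lt lam hij
  simp only [Set.mem_ofPred_eq] at hj ⊢
  omega

theorem flatPart_pos_iff {i : ℕ} : 0 < flatPart lam i ↔ i < kFlat lam := by
  have hlower : IsLowerSet {i | 0 < flatPart lam i} := fun _ _ hji hi =>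
    hi.trans_le (flatPart_antitone lam hji)
  rcases hlower.eq_univ_or_Iio with huniv | ⟨k, hk⟩
  · have : 0 < flatPart lam (lam 0) := huniv.symm.subset (Set.mem_univ _)
    have := flatPart_le_sub lam (lam 0)
    omega
  · have hkFlat : kFlat lam = k := by
      rw [kFlat, hk, ← Finset.coe_Iio, Set.ncard_coe_finset, Nat.card_Iio]
    rw [hkFlat]
    exact Set.ext_iff.mp hk i

theorem barLam_succ {n v : ℕ} (hv : v < n) :
    barLam lam n (v + 1) = flatPart lam v + min v (kFlat lam) := by
  have := flatPart_pos_iff lam (i := v)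
  rw [barLam, if_pos (by omega), Nat.add_sub_cancel]
  split_ifs <;> omega

end flatPart

theorem sum_Icc_one_eq_sum_range {M : Type*} [AddCommMonoid M] (f : ℕ → M) (n : ℕ) :
    ∑ v ∈ Finset.Icc 1 n, f v = ∑ v ∈ Finset.range n, f (v + 1) := by
  rw [Finset.range_eq_Ico, Finset.sum_Ico_add', zero_add, Finset.Ico_add_one_right_eq_Icc]

theorem sum_range_add_min {f : ℕ → ℕ} {k : ℕ} (hf : ∀ m, k ≤ m → f m = 0) (n : ℕ) :
    ∑ v ∈ Finset.range n, (f v + min v k) =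
      ∑ m ∈ Finset.range (min n k), (f m + n - (m + 1)) := by
  induction n with
  | zero => simp
  | succ n ih =>
    have hshift (l : ℕ) (hl : l ≤ n) : ∑ m ∈ Finset.range l, (f m + (n + 1) - (m + 1)) =
        ∑ m ∈ Finset.range l, (f m + n - (m + 1)) + l := by
      calc ∑ m ∈ Finset.range l, (f m + (n + 1) - (m + 1))
          = ∑ m ∈ Finset.range l, (f m + n - (m + 1) + 1) :=
            Finset.sum_congr rfl fun m hm => by
              have := Finset.mem_range.mp hm
              omega
        _ = ∑ m ∈ Finset.range l, (f m + n - (m + 1)) + l := by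
            simp [Finset.sum_add_distrib]
    rw [Finset.sum_range_succ, ih]
    rcases lt_or_ge n k with hnk | hkn
    · rw [min_eq_left hnk.le, min_eq_left (Nat.succ_le_of_lt hnk), Finset.sum_range_succ,
        hshift n le_rfl]
      omega
    · rw [min_eq_right hkn, min_eq_right (hkn.trans n.le_succ), hshift k hkn, hf n hkn, zero_add]

theorem sum_barLam (lam : ℕ → ℕ) (n : ℕ) :
    ∑ v ∈ Finset.Icc 1 n, barLam lam n v =
      ∑ r ∈ Finset.range (min n (kFlat lam)), (flatPart lam r + n - (r + 1)) := by
  have hzero (m : ℕ) (hm : kFlat lam ≤ m) : flatPart lam m = 0 :=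
    Nat.eq_zero_of_not_pos fun h => hm.not_gt ((flatPart_pos_iff lam).mp h)
  rw [← sum_range_add_min hzero, sum_Icc_one_eq_sum_range]
  exact Finset.sum_congr rfl fun v hv => barLam_succ lam (Finset.mem_range.mp hv)

/-! ### Bounding the number of points -/

section UpperBound

variable {lam mu : ℕ → ℕ} {T : ℕ → ℕ → Finset ℕ} {n : ℕ}

theorem IsSVRPP.antidiagonalRank_bounds (hlam : Antitone lam) (hmu : Antitone mu)
    (hT : IsSVRPP lam mu T) {i j x : ℕ} (hx : x ∈ T i j) {r : ℕ}
    (hr : antidiagonalRank (columnContent T) (j, x) = r) :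
    r ≤ i ∧ r < x ∧ j < flatPart lam r := by
  have hj := (hT.inShape_of_mem hx).2
  induction r generalizing i j x with
  | zero => exact ⟨i.zero_le, hT.2.2.1 i j x hx, hj.trans_le (hlam i.zero_le)⟩
  | succ r ih =>
    obtain ⟨⟨j', x'⟩, hright, hr'⟩ :=
      exists_mem_antidiagonalRight_of_antidiagonalRank_eq_succ hr
    obtain ⟨hsum, hlt, i', hx'⟩ := mem_antidiagonalRight.mp hright
    dsimp only at hsum hlt hx'
    obtain ⟨hri', hrx', hj'⟩ := ih hx' hr' (hT.inShape_of_mem hx').2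
    have hxx' : x' < x := by omega
    have hi : i' < i := not_le.mp fun h =>
      hxx'.not_ge (hT.le_of_le_of_lt hlam hmu h hlt hx hx')
    have hri : r + 1 ≤ i := by omega
    exact ⟨hri, by omega, lt_min (by omega) (hj.trans_le (hlam hri))⟩

theorem IsSVRPPn.card_filter_antidiagonalRank_le (hlam : Antitone lam) (hmu : Antitone mu)
    (hT : IsSVRPPn lam mu n T) {S : Finset (ℕ × ℕ)} (hS : ↑S ⊆ columnContent T) (r : ℕ) :
    {p ∈ S | antidiagonalRank (columnContent T) p = r}.card ≤ flatPart lam r + n - (r + 1) := by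
  rw [← Nat.card_Ico]
  refine Finset.card_le_card_of_injOn (fun p => p.1 + p.2) (fun p hp => ?_)
    fun p hp q hq hsum => ?_
  · obtain ⟨hpS, hr⟩ := Finset.mem_filter.mp hp
    obtain ⟨i, hi⟩ := hS hpS
    have hpn := Finset.mem_Icc.mp (hT.2 i p.1 hi)
    have := hT.1.antidiagonalRank_bounds hlam hmu hi hr
    simp only [Finset.coe_Ico, Set.mem_Ico]
    omega
  · obtain ⟨hpS, hpr⟩ := Finset.mem_filter.mp hp
    obtain ⟨hqS, hqr⟩ := Finset.mem_filter.mp hq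
    exact eq_of_antidiagonalRank_eq (hS hpS) (hS hqS) (hpr.trans hqr.symm) hsum

theorem IsSVRPPn.sum_ircont_le (hlam : Antitone lam) (hmu : Antitone mu)
    (hT : IsSVRPPn lam mu n T) :
    ∑ v ∈ Finset.Icc 1 n, ircont T v ≤ ∑ v ∈ Finset.Icc 1 n, barLam lam n v := by
  have hfin := hT.finite_columnContent hlam
  have hrank : Set.MapsTo (antidiagonalRank (columnContent T)) hfin.toFinset
      (Finset.range (min n (kFlat lam))) := by
    intro p hp
    obtain ⟨i, hi⟩ := hfin.mem_toFinset.mp hp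
    have hpn := Finset.mem_Icc.mp (hT.2 i p.1 hi)
    obtain ⟨-, hlt, hflat⟩ := hT.1.antidiagonalRank_bounds hlam hmu hi rfl
    simpa using ⟨hlt.trans_le hpn.2, (flatPart_pos_iff lam).mp (Nat.zero_lt_of_lt hflat)⟩
  rw [hT.sum_ircont hlam, Set.ncard_eq_toFinset_card _ hfin,
    Finset.card_eq_sum_card_fiberwise hrank, sum_barLam]
  exact Finset.sum_le_sum fun r _ =>
    hT.card_filter_antidiagonalRank_le hlam hmu hfin.coe_toFinset.subset r

end UpperBound

/-! ### Maximality of `T_max` -/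

section Tmax

variable {lam : ℕ → ℕ} {n : ℕ}

theorem mem_Tmax {i j x : ℕ} : x ∈ Tmax lam n i j ↔ j < lam i ∧
    (i < n ∧ j + 1 < flatPart lam i ∧ x = i + 1 ∨
      i < n ∧ j + 1 = flatPart lam i ∧ i + 1 ≤ x ∧ x ≤ n ∨
      (n ≤ i ∨ flatPart lam i ≤ j) ∧ x = n) := by
  unfold Tmax
  split_ifs <;>
    simp only [Finset.mem_singleton, Finset.mem_Icc, Finset.notMem_empty, false_iff] <;> omega

theorem isSVRPPn_Tmax (hn : 1 ≤ n) : IsSVRPPn lam (fun _ => 0) n (Tmax lam n) := by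
  have hsub (i j : ℕ) : Tmax lam n i j ⊆ Finset.Icc 1 n := fun x hx => by
    rw [mem_Tmax] at hx
    rw [Finset.mem_Icc]
    omega
  refine ⟨⟨fun i j h => ?_, fun i j h => ?_, fun i j x hx => ?_, fun i j _ _ x hx y hy => ?_,
    fun i j _ _ x hx y hy => ?_⟩, hsub⟩
  · exact if_neg fun hj => h ⟨Nat.zero_le _, hj⟩
  · by_cases hlt : i < n ∧ j + 1 < flatPart lam i
    · exact ⟨i + 1, mem_Tmax.mpr ⟨h.2, .inl ⟨hlt.1, hlt.2, rfl⟩⟩⟩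
    · exact ⟨n, mem_Tmax.mpr ⟨h.2, by omega⟩⟩
  · exact (Finset.mem_Icc.mp (hsub i j hx)).1
  · rw [mem_Tmax] at hx hy
    omega
  · have := flatPart_succ_le lam i
    rw [mem_Tmax] at hx hy
    omega

theorem succ_mem_Tmax_of_lt_flatPart {v j : ℕ} (hv : v < n) (hj : j < flatPart lam v) :
    v + 1 ∈ Tmax lam n v j := by
  have := flatPart_le lam v
  rw [mem_Tmax]
  omega

theorem succ_mem_Tmax_flatPart_sub_one {i v : ℕ} (hiv : i ≤ v) (hv : v < n)
    (hi : 0 < flatPart lam i) : v + 1 ∈ Tmax lam n i (flatPart lam i - 1) := by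
  have := flatPart_le lam i
  rw [mem_Tmax]
  omega

theorem barLam_le_ircont_Tmax (hlam : Antitone lam) {v : ℕ} (hv : v ∈ Finset.Icc 1 n) :
    barLam lam n v ≤ ircont (Tmax lam n) v := by
  obtain ⟨v, rfl⟩ := Nat.exists_eq_add_of_le' (Finset.mem_Icc.mp hv).1
  have hvn : v < n := (Finset.mem_Icc.mp hv).2
  let ends : Finset ℕ := (Finset.range (min v (kFlat lam))).image fun i => flatPart lam i - 1
  have hpos (i : ℕ) (hi : i < min v (kFlat lam)) : 0 < flatPart lam i :=
    (flatPart_pos_iff lam).mpr (hi.trans_le (min_le_right _ _))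
  have hends : ends.card = min v (kFlat lam) := by
    rw [Finset.card_image_of_injOn ((strictAntiOn_flatPart_sub_one lam).injOn.mono fun i hi =>
      hpos i (by simpa using hi)), Finset.card_range]
  have hdisj : Disjoint (Finset.range (flatPart lam v)) ends := by
    simp only [ends, Finset.disjoint_right, Finset.forall_mem_image, Finset.mem_range, not_lt]
    exact fun i hi => flatPart_le_sub_one_of_lt lam (hi.trans_le (min_le_left _ _))
  have hfin : {j | ∃ i, v + 1 ∈ Tmax lam n i j}.Finite :=
    (Set.finite_Iio (lam 0)).subset fun j hj =>
      (isSVRPPn_Tmax (by omega)).1.lt_of_mem_columnContent hlam (p := (j, v + 1)) hj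
  rw [barLam_succ lam hvn, ← hends, ← Finset.card_range (flatPart lam v),
    ← Finset.card_union_of_disjoint hdisj, ← Set.ncard_coe_finset]
  refine Set.ncard_le_ncard (fun j hj => ?_) hfin
  rcases Finset.mem_union.mp hj with hj | hj
  · exact ⟨v, succ_mem_Tmax_of_lt_flatPart hvn (Finset.mem_range.mp hj)⟩
  · obtain ⟨i, hi, rfl⟩ := Finset.mem_image.mp hj
    rw [Finset.mem_range] at hi
    exact ⟨i, succ_mem_Tmax_flatPart_sub_one (hi.le.trans (min_le_left _ _)) hvn (hpos i hi)⟩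

end Tmax

theorem totalDegree_hybridG11 {lam : ℕ → ℕ} (hlam : IsPartitionFun lam) (n : ℕ) :
    (hybridG11 lam n).totalDegree =
      (finite_setOf_isSVRPPn hlam (fun _ => 0) n).toFinset.sup
        fun T => ∑ v ∈ Finset.Icc 1 n, ircont T v := by
  rw [hybridG11, finsum_mem_eq_finite_toFinset_sum _ (finite_setOf_isSVRPPn hlam _ n),
    totalDegree_sum_prod_X_pow]
  simp only [sum_Icc_one_eq_sum_range, Finset.sum_range]

/-- For any partition `lam` and any `n ≥ 1`, the total degree in the
`x`-variables of `G_lam(x_1,…,x_n; 1; 1)` equals `|λ̄^{(n)}| = Σ_v λ̄^{(n)}_v`. -/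
theorem hybridG11_totalDegree (lam : ℕ → ℕ) (hlam : IsPartitionFun lam)
    (n : ℕ) (hn : 1 ≤ n) :
    (hybridG11 lam n).totalDegree = ∑ v ∈ Finset.Icc 1 n, barLam lam n v := by
  rw [totalDegree_hybridG11 hlam]
  apply le_antisymm
  · refine Finset.sup_le fun T hT => ?_
    exact ((Set.Finite.mem_toFinset _).mp hT).sum_ircont_le hlam.antitone antitone_const
  · calc ∑ v ∈ Finset.Icc 1 n, barLam lam n v
        ≤ ∑ v ∈ Finset.Icc 1 n, ircont (Tmax lam n) v :=
          Finset.sum_le_sum fun _ hv => barLam_le_ircont_Tmax hlam.antitone hv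
      _ ≤ _ := Finset.le_sup (f := fun T => ∑ v ∈ Finset.Icc 1 n, ircont T v)
          ((Set.Finite.mem_toFinset _).mpr (isSVRPPn_Tmax hn))
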